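/- arXiv:2308.07875 — 2 statements merged into one kernel-verified Lean document; each statement's English description precedes it below -/
import Mathlib

section
/- Let a ∈ ℝ with |a| ≤ 1/2 and b > 0 with b² + (|a| − 1/2)² ≥ 1/4, and let Γ = ℤ(1,0) + ℤ(a,b). Then: (i) there exists a smooth φ : ℝ² → ℂ², not identically zero, with φ(p + (1,0)) = φ(p) and φ(p + (a,b)) = −φ(p) for all p ∈ ℝ², satisfying (∂ₓ − i∂_y)φ₂ = (π/b) φ₁ and −(∂ₓ + i∂_y)φ₁ = (π/b) φ₂; (ii) for every λ with 0 < λ < π/b there is no such nonzero smooth equivariant solution of (∂ₓ − i∂_y)φ₂ = λφ₁, −(∂ₓ + i∂_y)φ₁ = λφ₂. (The first positive Dirac eigenvalue of the flat torus with the non-trivial spin structure is λ₁(𝕋², g_{a,b}, S₁) = π/b.) -/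
/-- Partial derivative in the first coordinate direction of a map on `ℝ × ℝ`. -/
noncomputable def dX (f : ℝ × ℝ → ℂ) (p : ℝ × ℝ) : ℂ := fderiv ℝ f p (1, 0)

/-- Partial derivative in the second coordinate direction of a map on `ℝ × ℝ`. -/
noncomputable def dY (f : ℝ × ℝ → ℂ) (p : ℝ × ℝ) : ℂ := fderiv ℝ f p (0, 1)

/-!
Equivariant functions have a Fourier expansion in the plane waves `𝐞 (ξ₁ x + ξ₂ y)` whose frequency
`ξ` pairs to an integer `n` with `(1, 0)` and to a half-integer `m + 1/2` with `(a, b)`. On the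
component of frequency `ξ` the Dirac operator acts as the Clifford matrix of `2πξ`, whose square is
`4π²|ξ|²`, so a nonzero `λ` is an eigenvalue iff `λ² = 4π²|ξ|²` for one of these `ξ`. The frequency
with `n = m = 0` gives `π/b`, and none is shorter because
`b²|ξ|² = n² b² + (m + 1/2 - n a)² ≥ 1/4` for all integers `n` and `m`.
-/

open MeasureTheory Real
open Complex (I ofRealCLM)
open scoped FourierTransform ContDiff

section FourierChar

lemma fourierChar_intCast (n : ℤ) : 𝐞 (n : ℝ) = 1 := by
  ext
  rw [fourierChar_apply, Circle.coe_one, ← Complex.exp_int_mul_two_pi_mul_I n]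
  congr 1
  push_cast
  ring

lemma coe_fourierChar_intCast_add_half (n : ℤ) : (𝐞 (n + 1 / 2 : ℝ) : ℂ) = -1 := by
  rw [AddChar.map_add_eq_mul, fourierChar_intCast, one_mul, fourierChar_apply,
    ← Complex.exp_pi_mul_I]
  congr 1
  push_cast
  ring

@[fun_prop]
lemma continuous_coe_fourierChar : Continuous fun x : ℝ ↦ (𝐞 x : ℂ) :=
  continuous_subtype_val.comp continuous_fourierChar

end FourierChar

section OneVariable

variable {F F' : ℝ → ℂ} {x θ : ℝ}

lemma integral_fourierChar_mul_deriv (hF : ∀ s, HasDerivAt F (F' s) s) (hF' : Continuous F')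
    (hbdry : F 1 = 𝐞 x * F 0) :
    ∫ s in (0 : ℝ)..1, 𝐞 (-(x * s)) * F' s =
      2 * π * I * x * ∫ s in (0 : ℝ)..1, 𝐞 (-(x * s)) * F s := by
  have hwave (s : ℝ) : HasDerivAt (fun s : ℝ ↦ (𝐞 (-(x * s)) : ℂ))
      (-(2 * π * I * x) * 𝐞 (-(x * s))) s := by
    convert! (hasDerivAt_fourierChar (-(x * s))).scomp s ((hasDerivAt_id s).const_mul x).neg using 1
    simp only [mul_one, Complex.real_smul, Complex.ofReal_neg]
    ring
  have hcancel : (𝐞 (-x) : ℂ) * 𝐞 x = 1 := by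
    rw [← Circle.coe_mul, ← AddChar.map_add_eq_mul, neg_add_cancel, AddChar.map_zero_eq_one,
      Circle.coe_one]
  rw [intervalIntegral.integral_mul_deriv_eq_deriv_mul (fun s _ ↦ hwave s) (fun s _ ↦ hF s)
    ((by fun_prop : Continuous _).intervalIntegrable _ _) (hF'.intervalIntegrable _ _)]
  simp only [mul_assoc, neg_mul, intervalIntegral.integral_neg, intervalIntegral.integral_const_mul,
    mul_one, mul_zero, neg_zero, AddChar.map_zero_eq_one, Circle.coe_one, one_mul, hbdry]
  linear_combination F 0 * hcancel

lemma eq_zero_of_periodic_of_integral_eq_zero (hF : Continuous F) (hper : Function.Periodic F 1)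
    (hcoeff : ∀ n : ℤ, ∫ s in (0 : ℝ)..1, 𝐞 (-(n * s)) * F s = 0) : F = 0 := by
  have : Fact ((0 : ℝ) < 1) := ⟨one_pos⟩
  let G : C(AddCircle (1 : ℝ), ℂ) := ⟨hper.lift, continuous_coinduced_dom.mpr hF⟩
  have hG : fourierCoeff G = 0 := by
    funext n
    rw [fourierCoeff_eq_intervalIntegral G n 0, zero_add, div_one, one_smul, Pi.zero_apply,
      ← hcoeff n]
    refine intervalIntegral.integral_congr fun s _ ↦ ?_
    simp only [fourier_coe_apply, smul_eq_mul, fourierChar_apply]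
    congr 2
    push_cast
    ring
  funext s
  have hsum := has_pointwise_sum_fourier_series_of_summable (f := G) (hG ▸ summable_zero) s
  simp only [hG, Pi.zero_apply, zero_smul] at hsum
  exact hsum.unique hasSum_zero

lemma eq_zero_of_quasiperiodic_of_integral_eq_zero (hF : Continuous F)
    (hquasi : ∀ s, F (s + 1) = 𝐞 θ * F s)
    (hcoeff : ∀ n : ℤ, ∫ s in (0 : ℝ)..1, 𝐞 (-((n + θ) * s)) * F s = 0) : F = 0 := by
  have hadd (r s : ℝ) : (𝐞 (r + s) : ℂ) = 𝐞 r * 𝐞 s := by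
    rw [AddChar.map_add_eq_mul, Circle.coe_mul]
  have huntwist : (fun s ↦ 𝐞 (-(θ * s)) * F s) = 0 := by
    refine eq_zero_of_periodic_of_integral_eq_zero (by fun_prop) (fun s ↦ ?_) fun n ↦ ?_
    · simp only [hquasi, ← mul_assoc, ← hadd]
      ring_nf
    · rw [← hcoeff n]
      refine intervalIntegral.integral_congr fun s _ ↦ ?_
      simp only [← mul_assoc, ← hadd]
      ring_nf
  funext s
  exact (mul_eq_zero.1 (congrFun huntwist s)).resolve_left (Circle.coe_ne_zero _)

end OneVariable

section CellFourierCoeff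

variable {V : Type*} [NormedAddCommGroup V] [NormedSpace ℝ V] {f g : V → ℂ} {u w : V} {x y : ℝ}

/-- The Fourier coefficient of `f` over the parallelogram spanned by `u` and `w`, at the frequency
that pairs to `x` with `u` and to `y` with `w`. It is meant for functions that are multiplied by
`𝐞 x` under translation by `u` and by `𝐞 y` under translation by `w`. -/
noncomputable def cellFourierCoeff (u w : V) (f : V → ℂ) (x y : ℝ) : ℂ :=
  ∫ t in (0 : ℝ)..1, 𝐞 (-(y * t)) * ∫ s in (0 : ℝ)..1, 𝐞 (-(x * s)) * f (s • u + t • w)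

lemma cellFourierCoeff_const_mul (c : ℂ) :
    cellFourierCoeff u w (fun p ↦ c * f p) x y = c * cellFourierCoeff u w f x y := by
  simp only [cellFourierCoeff, mul_left_comm _ c, intervalIntegral.integral_const_mul]

lemma cellFourierCoeff_add (hf : Continuous f) (hg : Continuous g) :
    cellFourierCoeff u w (fun p ↦ f p + g p) x y =
      cellFourierCoeff u w f x y + cellFourierCoeff u w g x y := by
  have hinner (h : V → ℂ) (hh : Continuous h) (t : ℝ) :
      IntervalIntegrable (fun s : ℝ ↦ 𝐞 (-(x * s)) * h (s • u + t • w)) volume 0 1 :=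
    (by fun_prop : Continuous _).intervalIntegrable _ _
  have houter (h : V → ℂ) (hh : Continuous h) : IntervalIntegrable
      (fun t : ℝ ↦ 𝐞 (-(y * t)) * ∫ s in (0 : ℝ)..1, 𝐞 (-(x * s)) * h (s • u + t • w))
      volume 0 1 :=
    (by fun_prop : Continuous _).intervalIntegrable _ _
  simp only [cellFourierCoeff, mul_add,
    intervalIntegral.integral_add (hinner f hf _) (hinner g hg _),
    intervalIntegral.integral_add (houter f hf) (houter g hg)]

lemma cellFourierCoeff_comm (hf : Continuous f) :
    cellFourierCoeff u w f x y = cellFourierCoeff w u f y x := by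
  simp only [cellFourierCoeff, ← intervalIntegral.integral_const_mul]
  rw [intervalIntegral_intervalIntegral_swap]
  · simp only [mul_left_comm (𝐞 (-(y * _)) : ℂ), add_comm (_ • u)]
  · have hcont : Continuous (Function.uncurry fun t s : ℝ ↦
        (𝐞 (-(y * t)) : ℂ) * (𝐞 (-(x * s)) * f (s • u + t • w))) := by fun_prop
    exact (hcont.continuousOn.integrableOn_compact (isCompact_uIcc.prod isCompact_uIcc)).mono_set
      (Set.prod_mono Set.uIoc_subset_uIcc Set.uIoc_subset_uIcc)

lemma cellFourierCoeff_fderiv_left (hf : ContDiff ℝ 1 f) (hu : ∀ p, f (p + u) = 𝐞 x * f p) :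
    cellFourierCoeff u w (fun p ↦ fderiv ℝ f p u) x y =
      2 * π * I * x * cellFourierCoeff u w f x y := by
  have hcont : Continuous (fderiv ℝ f) := hf.continuous_fderiv one_ne_zero
  have hderiv (t s : ℝ) :
      HasDerivAt (fun s : ℝ ↦ f (s • u + t • w)) (fderiv ℝ f (s • u + t • w) u) s := by
    have hline : HasDerivAt (fun s : ℝ ↦ s • u + t • w) u s := by
      simpa using ((hasDerivAt_id s).smul_const u).add_const (t • w)
    exact (hf.differentiable one_ne_zero _).hasFDerivAt.comp_hasDerivAt s hline
  have hbdry (t : ℝ) : f ((1 : ℝ) • u + t • w) = 𝐞 x * f ((0 : ℝ) • u + t • w) := by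
    rw [← hu, zero_smul, zero_add, one_smul, add_comm]
  have hinner (t : ℝ) := integral_fourierChar_mul_deriv (hderiv t)
    ((hcont.comp (by fun_prop)).clm_apply continuous_const) (hbdry t)
  simp only [cellFourierCoeff, hinner, mul_left_comm (𝐞 (-(y * _)) : ℂ),
    intervalIntegral.integral_const_mul]

lemma cellFourierCoeff_fderiv (hf : ContDiff ℝ 1 f) (hu : ∀ p, f (p + u) = 𝐞 x * f p)
    (hw : ∀ p, f (p + w) = 𝐞 y * f p) (c d : ℝ) :
    cellFourierCoeff u w (fun p ↦ fderiv ℝ f p (c • u + d • w)) x y =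
      2 * π * I * (c * x + d * y : ℝ) * cellFourierCoeff u w f x y := by
  have hcont (v : V) : Continuous fun p ↦ fderiv ℝ f p v :=
    (hf.continuous_fderiv one_ne_zero).clm_apply continuous_const
  have hright : cellFourierCoeff u w (fun p ↦ fderiv ℝ f p w) x y =
      2 * π * I * y * cellFourierCoeff u w f x y := by
    rw [cellFourierCoeff_comm (hcont w), cellFourierCoeff_fderiv_left hf hw,
      cellFourierCoeff_comm hf.continuous]
  simp only [map_add, map_smul, Complex.real_smul]
  rw [cellFourierCoeff_add ((hcont u).const_mul _) ((hcont w).const_mul _),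
    cellFourierCoeff_const_mul, cellFourierCoeff_const_mul, cellFourierCoeff_fderiv_left hf hu,
    hright]
  push_cast
  ring

lemma eq_zero_of_cellFourierCoeff_eq_zero (hf : Continuous f) (hu : ∀ p, f (p + u) = 𝐞 x * f p)
    (hw : ∀ p, f (p + w) = 𝐞 y * f p)
    (hcoeff : ∀ n m : ℤ, cellFourierCoeff u w f (n + x) (m + y) = 0) (s t : ℝ) :
    f (s • u + t • w) = 0 := by
  have hinner (n : ℤ) :
      (fun t : ℝ ↦ ∫ s in (0 : ℝ)..1, 𝐞 (-((n + x) * s)) * f (s • u + t • w)) = 0 := by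
    refine eq_zero_of_quasiperiodic_of_integral_eq_zero (by fun_prop) (fun t ↦ ?_) (hcoeff n)
    simp only [add_smul, one_smul, ← add_assoc, hw, mul_left_comm _ (𝐞 y : ℂ),
      intervalIntegral.integral_const_mul]
  have hline : (fun s : ℝ ↦ f (s • u + t • w)) = 0 := by
    refine eq_zero_of_quasiperiodic_of_integral_eq_zero (by fun_prop) (fun s ↦ ?_)
      fun n ↦ congrFun (hinner n) t
    rw [← hu, add_smul, one_smul, add_right_comm]
  exact congrFun hline s

end CellFourierCoeff

section PlaneWave

variable (ξ : ℝ × ℝ)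

/-- The plane wave of frequency `ξ` on `ℝ × ℝ`. -/
noncomputable def planeWave (p : ℝ × ℝ) : ℂ := 𝐞 (ξ.1 * p.1 + ξ.2 * p.2)

lemma planeWave_ne_zero (p : ℝ × ℝ) : planeWave ξ p ≠ 0 := Circle.coe_ne_zero _

lemma planeWave_add (p q : ℝ × ℝ) : planeWave ξ (p + q) = planeWave ξ p * planeWave ξ q := by
  rw [planeWave, planeWave, planeWave, ← Circle.coe_mul, ← AddChar.map_add_eq_mul, Prod.fst_add,
    Prod.snd_add]
  ring_nf

lemma contDiff_planeWave : ContDiff ℝ ∞ (planeWave ξ) := by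
  have hphase : ContDiff ℝ ∞ fun p : ℝ × ℝ ↦ ((2 * π * (ξ.1 * p.1 + ξ.2 * p.2) : ℝ) : ℂ) :=
    ofRealCLM.contDiff.comp (contDiff_const.mul (by fun_prop))
  exact (hphase.mul contDiff_const).cexp

lemma fderiv_const_mul_planeWave (c : ℂ) (p v : ℝ × ℝ) :
    fderiv ℝ (fun q ↦ c * planeWave ξ q) p v =
      c * (2 * π * I * (ξ.1 * v.1 + ξ.2 * v.2 : ℝ) * planeWave ξ p) := by
  have hphase : HasFDerivAt (fun q : ℝ × ℝ ↦ ξ.1 * q.1 + ξ.2 * q.2)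
      (ξ.1 • ContinuousLinearMap.fst ℝ ℝ ℝ + ξ.2 • ContinuousLinearMap.snd ℝ ℝ ℝ) p :=
    (hasFDerivAt_fst.const_mul ξ.1).add (hasFDerivAt_snd.const_mul ξ.2)
  have hwave : HasFDerivAt (fun q ↦ c * planeWave ξ q) _ p :=
    ((hasDerivAt_fourierChar _).hasFDerivAt.comp p hphase).const_mul c
  rw [hwave.fderiv]
  simp only [add_apply, smul_apply, ContinuousLinearMap.comp_apply, ContinuousLinearMap.coe_fst',
    ContinuousLinearMap.coe_snd', ContinuousLinearMap.toSpanSingleton_apply, Complex.real_smul,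
    smul_eq_mul, planeWave]
  ring

end PlaneWave

section Spectrum

variable {a b lam : ℝ} {φ : ℝ × ℝ → ℂ × ℂ}

/-- `φ` is an equivariant spinor for the lattice `ℤ(1,0) + ℤ(a,b)` and the spin structure that is
trivial on `(1,0)` and non-trivial on `(a,b)`, and it satisfies `Dφ = lam φ`. The zero spinor is
allowed, and no differentiability is required: smoothness is assumed separately. -/
structure IsDiracEigenspinor (a b lam : ℝ) (φ : ℝ × ℝ → ℂ × ℂ) : Prop where
  periodic : ∀ p : ℝ × ℝ, φ (p.1 + 1, p.2) = φ p
  antiperiodic : ∀ p : ℝ × ℝ, φ (p.1 + a, p.2 + b) = -φ p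
  dirac_fst : ∀ p : ℝ × ℝ,
    dX (fun q ↦ (φ q).2) p - I * dY (fun q ↦ (φ q).2) p = (lam : ℂ) * (φ p).1
  dirac_snd : ∀ p : ℝ × ℝ,
    -(dX (fun q ↦ (φ q).1) p + I * dY (fun q ↦ (φ q).1) p) = (lam : ℂ) * (φ p).2

/-- The frequency `ξ` with `⟨ξ, (1,0)⟩ = n` and `⟨ξ, (a,b)⟩ = m + 1/2`; these are the frequencies of
the plane waves that are invariant under `(1,0)` and change sign under `(a,b)`. -/
noncomputable def spinFrequency (a b : ℝ) (n m : ℤ) : ℝ × ℝ := (n, (m + 1 / 2 - n * a) / b)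

/-- The Fourier coefficient of `f` at the frequency `spinFrequency a b n m`, computed over the cell
spanned by `(1,0)` and `(a,b)`. -/
noncomputable def spinFourierCoeff (a b : ℝ) (f : ℝ × ℝ → ℂ) (n m : ℤ) : ℂ :=
  cellFourierCoeff (1, 0) (a, b) f n (m + 1 / 2)

lemma spinFourierCoeff_dX_add_mul_dY {f : ℝ × ℝ → ℂ} (hb : b ≠ 0) (hf : ContDiff ℝ 1 f)
    (hper : ∀ p, f (p + (1, 0)) = f p) (hanti : ∀ p, f (p + (a, b)) = -f p) (n m : ℤ) (c : ℂ) :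
    spinFourierCoeff a b (fun p ↦ dX f p + c * dY f p) n m =
      2 * π * I * ((spinFrequency a b n m).1 + c * (spinFrequency a b n m).2) *
        spinFourierCoeff a b f n m := by
  have hcont (v : ℝ × ℝ) : Continuous fun p ↦ fderiv ℝ f p v :=
    (hf.continuous_fderiv one_ne_zero).clm_apply continuous_const
  have hfderiv := cellFourierCoeff_fderiv (u := (1, 0)) (w := (a, b)) (x := n) (y := m + 1 / 2) hf
    (by simpa [fourierChar_intCast] using hper)
    (by simpa only [coe_fourierChar_intCast_add_half, neg_one_mul] using hanti)
  have hX := hfderiv 1 0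
  have hY := hfderiv (-a / b) (1 / b)
  have heX : (1 : ℝ) • ((1 : ℝ), (0 : ℝ)) + (0 : ℝ) • (a, b) = (1, 0) := by simp
  have heY : (-a / b) • ((1 : ℝ), (0 : ℝ)) + (1 / b) • (a, b) = (0, 1) := by
    ext <;> simp [hb, div_eq_inv_mul]
  rw [heX] at hX
  rw [heY] at hY
  simp only [spinFourierCoeff, dX, dY]
  rw [cellFourierCoeff_add (hcont _) ((hcont _).const_mul c), cellFourierCoeff_const_mul, hX, hY]
  simp only [spinFrequency]
  push_cast
  ring

lemma eq_zero_of_spinFourierCoeff_eq_zero {f : ℝ × ℝ → ℂ} (hb : b ≠ 0) (hf : Continuous f)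
    (hper : ∀ p, f (p + (1, 0)) = f p) (hanti : ∀ p, f (p + (a, b)) = -f p)
    (hcoeff : ∀ n m : ℤ, spinFourierCoeff a b f n m = 0) : f = 0 := by
  funext p
  have hhalf : (𝐞 (1 / 2 : ℝ) : ℂ) = -1 := by simpa using coe_fourierChar_intCast_add_half 0
  have hzero := eq_zero_of_cellFourierCoeff_eq_zero (u := (1, 0)) (w := (a, b)) (x := 0)
    (y := 1 / 2) hf (by simpa using hper) (by simpa only [hhalf, neg_one_mul] using hanti)
    (by simpa only [add_zero, spinFourierCoeff] using hcoeff) (p.1 - p.2 / b * a) (p.2 / b)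
  simpa [hb] using hzero

lemma planeWave_spinFrequency_add_one_zero (n m : ℤ) (p : ℝ × ℝ) :
    planeWave (spinFrequency a b n m) (p + (1, 0)) = planeWave (spinFrequency a b n m) p := by
  rw [planeWave_add]
  simp [planeWave, spinFrequency, fourierChar_intCast]

lemma planeWave_spinFrequency_add_lattice (hb : b ≠ 0) (n m : ℤ) (p : ℝ × ℝ) :
    planeWave (spinFrequency a b n m) (p + (a, b)) = -planeWave (spinFrequency a b n m) p := by
  rw [planeWave_add, ← mul_neg_one, ← coe_fourierChar_intCast_add_half m]
  simp only [planeWave, spinFrequency, div_mul_cancel₀ _ hb, add_sub_cancel]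

/-- The square of the eigenvalues of `D` at the frequency `spinFrequency a b n m`. -/
noncomputable def diracSymbolSq (a b : ℝ) (n m : ℤ) : ℝ :=
  4 * π ^ 2 * ((spinFrequency a b n m).1 ^ 2 + (spinFrequency a b n m).2 ^ 2)

namespace IsDiracEigenspinor

lemma map_add_one_zero (h : IsDiracEigenspinor a b lam φ) (p : ℝ × ℝ) : φ (p + (1, 0)) = φ p := by
  simpa only [Prod.add_def, add_zero] using h.periodic p

lemma mul_spinFourierCoeff_fst (h : IsDiracEigenspinor a b lam φ) (hb : b ≠ 0)
    (hφ : ContDiff ℝ 1 φ) (n m : ℤ) :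
    lam * spinFourierCoeff a b (fun p ↦ (φ p).1) n m =
      2 * π * ((spinFrequency a b n m).2 + I * (spinFrequency a b n m).1) *
        spinFourierCoeff a b (fun p ↦ (φ p).2) n m := by
  have hcoeff := spinFourierCoeff_dX_add_mul_dY hb hφ.snd
    (fun p ↦ congrArg Prod.snd (h.map_add_one_zero p))
    (fun p ↦ congrArg Prod.snd (h.antiperiodic p)) n m (-I)
  simp only [neg_mul, ← sub_eq_add_neg, h.dirac_fst] at hcoeff
  rw [spinFourierCoeff, cellFourierCoeff_const_mul] at hcoeff
  rw [spinFourierCoeff, hcoeff]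
  linear_combination -(2 * π * (spinFrequency a b n m).2 *
    spinFourierCoeff a b (fun p ↦ (φ p).2) n m) * Complex.I_sq

lemma mul_spinFourierCoeff_snd (h : IsDiracEigenspinor a b lam φ) (hb : b ≠ 0)
    (hφ : ContDiff ℝ 1 φ) (n m : ℤ) :
    lam * spinFourierCoeff a b (fun p ↦ (φ p).2) n m =
      2 * π * ((spinFrequency a b n m).2 - I * (spinFrequency a b n m).1) *
        spinFourierCoeff a b (fun p ↦ (φ p).1) n m := by
  have hcoeff := spinFourierCoeff_dX_add_mul_dY hb hφ.fst
    (fun p ↦ congrArg Prod.fst (h.map_add_one_zero p))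
    (fun p ↦ congrArg Prod.fst (h.antiperiodic p)) n m I
  simp only [neg_eq_iff_eq_neg.1 (h.dirac_snd _), ← neg_mul] at hcoeff
  rw [spinFourierCoeff, cellFourierCoeff_const_mul] at hcoeff
  rw [spinFourierCoeff, ← neg_inj, ← neg_mul, hcoeff]
  linear_combination (2 * π * (spinFrequency a b n m).2 *
    spinFourierCoeff a b (fun p ↦ (φ p).1) n m) * Complex.I_sq

lemma exists_sq_eq_diracSymbolSq (h : IsDiracEigenspinor a b lam φ) (hb : b ≠ 0)
    (hφ : ContDiff ℝ 1 φ) (hne : φ ≠ 0) : ∃ n m : ℤ, lam ^ 2 = diracSymbolSq a b n m := by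
  contrapose! hne
  have hcoeff (n m : ℤ) : spinFourierCoeff a b (fun p ↦ (φ p).1) n m = 0 ∧
      spinFourierCoeff a b (fun p ↦ (φ p).2) n m = 0 := by
    have hsymbol : ((lam ^ 2 - diracSymbolSq a b n m : ℝ) : ℂ) ≠ 0 :=
      Complex.ofReal_ne_zero.2 (sub_ne_zero.2 (hne n m))
    have hfst := h.mul_spinFourierCoeff_fst hb hφ n m
    have hsnd := h.mul_spinFourierCoeff_snd hb hφ n m
    constructor <;> refine (mul_eq_zero.1 ?_).resolve_left hsymbol <;>
      simp only [diracSymbolSq] <;> push_cast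
    · linear_combination lam * hfst +
        2 * π * ((spinFrequency a b n m).2 + I * (spinFrequency a b n m).1) * hsnd -
        4 * π ^ 2 * (spinFrequency a b n m).1 ^ 2 *
          spinFourierCoeff a b (fun p ↦ (φ p).1) n m * Complex.I_sq
    · linear_combination lam * hsnd +
        2 * π * ((spinFrequency a b n m).2 - I * (spinFrequency a b n m).1) * hfst -
        4 * π ^ 2 * (spinFrequency a b n m).1 ^ 2 *
          spinFourierCoeff a b (fun p ↦ (φ p).2) n m * Complex.I_sq
  have hfst := eq_zero_of_spinFourierCoeff_eq_zero hb hφ.continuous.fst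
    (fun p ↦ congrArg Prod.fst (h.map_add_one_zero p))
    (fun p ↦ congrArg Prod.fst (h.antiperiodic p)) fun n m ↦ (hcoeff n m).1
  have hsnd := eq_zero_of_spinFourierCoeff_eq_zero hb hφ.continuous.snd
    (fun p ↦ congrArg Prod.snd (h.map_add_one_zero p))
    (fun p ↦ congrArg Prod.snd (h.antiperiodic p)) fun n m ↦ (hcoeff n m).2
  exact funext fun p ↦ Prod.ext (congrFun hfst p) (congrFun hsnd p)

end IsDiracEigenspinor

lemma exists_isDiracEigenspinor_of_sq_eq (hb : b ≠ 0) (hlam : lam ≠ 0) {n m : ℤ}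
    (h : lam ^ 2 = diracSymbolSq a b n m) :
    ∃ φ, ContDiff ℝ ∞ φ ∧ φ ≠ 0 ∧ IsDiracEigenspinor a b lam φ := by
  set ξ := spinFrequency a b n m with hξ
  have hlamsq : (lam : ℂ) ^ 2 = 4 * π ^ 2 * (ξ.1 ^ 2 + ξ.2 ^ 2) := by
    exact_mod_cast h
  -- `(2π (ξ₂ + i ξ₁), lam)` is an eigenvector of the Clifford matrix of `2πξ`.
  refine ⟨fun p ↦ (2 * π * (ξ.2 + I * ξ.1) * planeWave ξ p, lam * planeWave ξ p),
    (contDiff_const.mul (contDiff_planeWave ξ)).prodMk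
      (contDiff_const.mul (contDiff_planeWave ξ)), fun hzero ↦ ?_, fun p ↦ ?_, fun p ↦ ?_,
    fun p ↦ ?_, fun p ↦ ?_⟩
  · exact mul_ne_zero (Complex.ofReal_ne_zero.2 hlam) (planeWave_ne_zero ξ 0)
      (congrArg Prod.snd (congrFun hzero 0))
  · have hshift := planeWave_spinFrequency_add_one_zero (a := a) (b := b) n m p
    simp only [Prod.add_def, add_zero, ← hξ] at hshift
    simp only [hshift]
  · have hshift := planeWave_spinFrequency_add_lattice (a := a) hb n m p
    simp only [Prod.add_def, ← hξ] at hshift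
    simp only [hshift, mul_neg, Prod.neg_mk]
  · simp only [dX, dY, fderiv_const_mul_planeWave]
    push_cast
    linear_combination -(2 * π * lam * ξ.2 * planeWave ξ p) * Complex.I_sq
  · simp only [dX, dY, fderiv_const_mul_planeWave]
    push_cast
    linear_combination -planeWave ξ p * hlamsq -
      4 * π ^ 2 * planeWave ξ p * (ξ.1 ^ 2 + ξ.2 ^ 2 + I * ξ.1 * ξ.2) * Complex.I_sq

end Spectrum

section ShortestFrequency

variable {a b : ℝ}

lemma intCast_mul_add_one_nonneg (k : ℤ) : (0 : ℝ) ≤ k * (k + 1) := by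
  have hk : 0 ≤ k * (k + 1) := by
    rcases le_or_gt 0 k with h | h <;> nlinarith
  exact_mod_cast hk

/-- Where `b² ≥ a - a²` is an equality, the difference of the two sides is the interpolation
`(1 - a) m (m + 1) + a (n - m - 1) (n - m)` between two products of consecutive integers. -/
lemma one_div_four_le_of_mem_Icc (ha : a ∈ Set.Icc 0 1) (hab : 1 / 4 ≤ b ^ 2 + (a - 1 / 2) ^ 2)
    (n m : ℤ) : 1 / 4 ≤ (n : ℝ) ^ 2 * b ^ 2 + (m + 1 / 2 - n * a) ^ 2 := by
  have hconsec : (0 : ℝ) ≤ (n - m - 1) * (n - m) := by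
    simpa using intCast_mul_add_one_nonneg (n - m - 1)
  have hinterp : 0 ≤ (1 - a) * (m * (m + 1)) + a * ((n - m - 1) * (n - m)) :=
    add_nonneg (mul_nonneg (sub_nonneg.2 ha.2) (intCast_mul_add_one_nonneg m))
      (mul_nonneg ha.1 hconsec)
  have hscaled : (n : ℝ) ^ 2 * (a - a ^ 2) ≤ (n : ℝ) ^ 2 * b ^ 2 := by
    gcongr
    linarith
  linarith

lemma one_div_four_le_of_abs_le_one (ha : |a| ≤ 1) (hab : 1 / 4 ≤ b ^ 2 + (|a| - 1 / 2) ^ 2)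
    (n m : ℤ) : 1 / 4 ≤ (n : ℝ) ^ 2 * b ^ 2 + (m + 1 / 2 - n * a) ^ 2 := by
  rcases abs_choice a with h | h
  · simpa [h] using one_div_four_le_of_mem_Icc ⟨abs_nonneg a, ha⟩ hab n m
  · simpa [h] using one_div_four_le_of_mem_Icc ⟨abs_nonneg a, ha⟩ hab (-n) m

lemma diracSymbolSq_zero_zero : diracSymbolSq a b 0 0 = (π / b) ^ 2 := by
  simp only [diracSymbolSq, spinFrequency]
  push_cast
  ring

lemma pi_div_sq_le_diracSymbolSq (ha : |a| ≤ 1) (hb : b ≠ 0)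
    (hab : 1 / 4 ≤ b ^ 2 + (|a| - 1 / 2) ^ 2) (n m : ℤ) :
    (π / b) ^ 2 ≤ diracSymbolSq a b n m := by
  calc (π / b) ^ 2 = 4 * (π / b) ^ 2 * (1 / 4) := by ring
    _ ≤ 4 * (π / b) ^ 2 * ((n : ℝ) ^ 2 * b ^ 2 + (m + 1 / 2 - n * a) ^ 2) := by
      gcongr
      exact one_div_four_le_of_abs_le_one ha hab n m
    _ = diracSymbolSq a b n m := by
      simp only [diracSymbolSq, spinFrequency]
      field_simp

end ShortestFrequency

theorem dirac_first_eigenvalue_flat_torus_nontrivial_spin_general {a b : ℝ} (ha : |a| ≤ 1)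
    (hb : b ≠ 0) (hab : 1 / 4 ≤ b ^ 2 + (|a| - 1 / 2) ^ 2) :
    (∃ φ, ContDiff ℝ ∞ φ ∧ φ ≠ 0 ∧ IsDiracEigenspinor a b (π / b) φ) ∧
      ∀ lam : ℝ, |lam| < |π / b| →
        ¬ ∃ φ, ContDiff ℝ 1 φ ∧ φ ≠ 0 ∧ IsDiracEigenspinor a b lam φ := by
  refine ⟨exists_isDiracEigenspinor_of_sq_eq hb (div_ne_zero pi_ne_zero hb)
    diracSymbolSq_zero_zero.symm, ?_⟩
  rintro lam hlam ⟨φ, hφ, hne, h⟩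
  obtain ⟨n, m, hsq⟩ := h.exists_sq_eq_diracSymbolSq hb hφ hne
  exact (sq_lt_sq.2 hlam).not_ge (hsq ▸ pi_div_sq_le_diracSymbolSq ha hb hab n m)

/-- The first positive Dirac eigenvalue of the flat torus `ℝ²/Γ`, `Γ = ℤ(1,0) + ℤ(a,b)`
(`|a| ≤ 1/2`, `b² + (|a| - 1/2)² ≥ 1/4`), with the non-trivial spin structure
(`χ(1,0) = 0`, `χ(a,b) = 1`) is `π/b`: there is a nonzero smooth equivariant eigenspinor
with eigenvalue `π/b`, and none with eigenvalue `λ` for any `0 < λ < π/b`. -/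
theorem dirac_first_eigenvalue_flat_torus_nontrivial_spin
    (a b : ℝ) (ha : |a| ≤ 1 / 2) (hb : 0 < b)
    (hab : 1 / 4 ≤ b ^ 2 + (|a| - 1 / 2) ^ 2) :
    (∃ φ : ℝ × ℝ → ℂ × ℂ, ContDiff ℝ (⊤ : ℕ∞) φ ∧ φ ≠ 0 ∧
      (∀ p : ℝ × ℝ, φ (p.1 + 1, p.2) = φ p) ∧
      (∀ p : ℝ × ℝ, φ (p.1 + a, p.2 + b) = -φ p) ∧
      (∀ p : ℝ × ℝ,
        dX (fun q => (φ q).2) p - Complex.I * dY (fun q => (φ q).2) p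
          = ((Real.pi / b : ℝ) : ℂ) * (φ p).1) ∧
      (∀ p : ℝ × ℝ,
        -(dX (fun q => (φ q).1) p + Complex.I * dY (fun q => (φ q).1) p)
          = ((Real.pi / b : ℝ) : ℂ) * (φ p).2)) ∧
    (∀ lam : ℝ, 0 < lam → lam < Real.pi / b →
      ¬ ∃ φ : ℝ × ℝ → ℂ × ℂ, ContDiff ℝ (⊤ : ℕ∞) φ ∧ φ ≠ 0 ∧
        (∀ p : ℝ × ℝ, φ (p.1 + 1, p.2) = φ p) ∧
        (∀ p : ℝ × ℝ, φ (p.1 + a, p.2 + b) = -φ p) ∧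
        (∀ p : ℝ × ℝ,
          dX (fun q => (φ q).2) p - Complex.I * dY (fun q => (φ q).2) p
            = (lam : ℂ) * (φ p).1) ∧
        (∀ p : ℝ × ℝ,
          -(dX (fun q => (φ q).1) p + Complex.I * dY (fun q => (φ q).1) p)
            = (lam : ℂ) * (φ p).2)) := by
  obtain ⟨⟨φ, hφ, hne, h⟩, hmin⟩ :=
    dirac_first_eigenvalue_flat_torus_nontrivial_spin_general (ha.trans (by norm_num)) hb.ne' hab
  refine ⟨⟨φ, hφ, hne, h.periodic, h.antiperiodic, h.dirac_fst, h.dirac_snd⟩, ?_⟩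
  rintro lam hpos hlt ⟨φ, hφ, hne, hper, hanti, hfst, hsnd⟩
  exact hmin lam (by rwa [abs_of_pos hpos, abs_of_pos (hpos.trans hlt)])
    ⟨φ, hφ.of_le (by exact_mod_cast le_top), hne, hper, hanti, hfst, hsnd⟩
end

section
/- Let X be a compact topological space and μ a finite Borel measure on X with full support and μ(X) > 0. Let d ≥ 1 and let V be a finite-dimensional complex subspace of the space of continuous maps X → ℂ^d. Suppose that for every continuous function ξ : X → ℝ with ∫_X ξ dμ = 0 there exists ψ ∈ V with ∫_X |ψ|² dμ = 1 and ∫_X ξ·|ψ|² dμ = 0. Then there exist m ≥ 1 and ψ₁, …, ψ_m ∈ V such that Σ_{j=1}^m |ψⱼ(x)|² = 1 for every x ∈ X. (This is the convexity/Hahn–Banach step in the proof of Proposition 1.2: a conformally critical metric for a Dirac eigenvalue admits eigenspinors ψ₁, …, ψ_m with Σ|ψⱼ|² = 1.) -/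
open MeasureTheory

/-!
The function `1 / μ(X)` lies in the convex hull of the densities `|ψ|²`, `ψ ∈ V`, `∫ |ψ|² = 1`.
These densities form a compact subset of a finite-dimensional space, so by Carathéodory's theorem
their convex hull is compact and has a point `c` nearest to `p = 1 / μ(X)` in `L²(μ)`. As `p` and
`c` both have integral one, `ξ = p - c` has mean zero and the hypothesis yields a density `ρ`
orthogonal to `ξ`. Minimality of `c` gives `⟪ξ, ρ - c⟫ ≤ 0`, that is `0 ≤ ⟪ξ, c⟫`, and
`⟪ξ, p⟫ = 0`; hence `‖ξ‖² = ⟪ξ, p⟫ - ⟪ξ, c⟫ ≤ 0` and `p = c`.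
-/

section ConvexHull

theorem vectorSpan_le_span {K M : Type*} [Ring K] [AddCommGroup M] [Module K M] (s : Set M) :
    vectorSpan K s ≤ Submodule.span K s := by
  rw [vectorSpan_def, Submodule.span_le]
  rintro _ ⟨x, hx, y, hy, rfl⟩
  exact sub_mem (Submodule.subset_span hx) (Submodule.subset_span hy)

variable {E : Type*} [AddCommGroup E] [Module ℝ E] {s : Set E}

/-- The set of convex combinations of `n` points of `s`, repetitions and zero weights allowed. -/
def convexCombinations (s : Set E) (n : ℕ) : Set E :=
  (fun p : (Fin n → ℝ) × (Fin n → E) ↦ ∑ i, p.1 i • p.2 i) ''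
    (stdSimplex ℝ (Fin n) ×ˢ Set.univ.pi fun _ ↦ s)

theorem mem_convexCombinations {n : ℕ} {x : E} :
    x ∈ convexCombinations s n ↔
      ∃ w ∈ stdSimplex ℝ (Fin n), ∃ z : Fin n → E, (∀ i, z i ∈ s) ∧ ∑ i, w i • z i = x := by
  simp [convexCombinations, and_assoc]

theorem convexCombinations_subset_convexHull (s : Set E) (n : ℕ) :
    convexCombinations s n ⊆ convexHull ℝ s := by
  intro x hx
  obtain ⟨w, ⟨hw_nonneg, hw_sum⟩, z, hz, rfl⟩ := mem_convexCombinations.1 hx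
  exact (convex_convexHull ℝ s).sum_mem (fun i _ ↦ hw_nonneg i) hw_sum
    fun i _ ↦ subset_convexHull ℝ s (hz i)

theorem sum_smul_mem_convexCombinations {ι : Type*} [Fintype ι] {w : ι → ℝ} {z : ι → E}
    (hw : w ∈ stdSimplex ℝ ι) (hz : ∀ i, z i ∈ s) :
    ∑ i, w i • z i ∈ convexCombinations s (Fintype.card ι) := by
  let e := (Fintype.equivFin ι).symm
  exact mem_convexCombinations.2 ⟨w ∘ e, ⟨fun i ↦ hw.1 (e i), (Equiv.sum_comp e w).trans hw.2⟩,
    z ∘ e, fun i ↦ hz (e i), Equiv.sum_comp e fun i ↦ w i • z i⟩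

theorem convexHull_eq_iUnion_convexCombinations (s : Set E) :
    convexHull ℝ s = ⋃ n, convexCombinations s n := by
  refine Set.Subset.antisymm (fun x hx ↦ ?_)
    (Set.iUnion_subset (convexCombinations_subset_convexHull s))
  obtain ⟨ι, _, w, z, hw_nonneg, hw_sum, hz, rfl⟩ := mem_convexHull_iff_exists_fintype.1 hx
  exact Set.mem_iUnion_of_mem _ (sum_smul_mem_convexCombinations ⟨hw_nonneg, hw_sum⟩ hz)

theorem convexHull_eq_biUnion_convexCombinations (s : Set E)
    [FiniteDimensional ℝ (vectorSpan ℝ s)] :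
    convexHull ℝ s =
      ⋃ n ∈ Set.Iic (Module.finrank ℝ (vectorSpan ℝ s) + 1), convexCombinations s n := by
  refine Set.Subset.antisymm (fun x hx ↦ ?_)
    (Set.iUnion₂_subset fun n _ ↦ convexCombinations_subset_convexHull s n)
  obtain ⟨ι, _, z, w, hz, hz_indep, hw_pos, hw_sum, rfl⟩ := eq_pos_convex_span_of_mem_convexHull hx
  have hcard : Fintype.card ι ≤ Module.finrank ℝ (vectorSpan ℝ s) + 1 :=
    hz_indep.card_le_finrank_succ.trans <|
      Nat.succ_le_succ <| Submodule.finrank_mono <| vectorSpan_mono ℝ hz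
  exact Set.mem_biUnion hcard
    (sum_smul_mem_convexCombinations ⟨fun i ↦ (hw_pos i).le, hw_sum⟩ fun i ↦ hz ⟨i, rfl⟩)

variable [TopologicalSpace E] [ContinuousAdd E] [ContinuousSMul ℝ E]

theorem isCompact_convexCombinations (hs : IsCompact s) (n : ℕ) :
    IsCompact (convexCombinations s n) :=
  ((isCompact_stdSimplex ℝ (Fin n)).prod (isCompact_univ_pi fun _ ↦ hs)).image (by fun_prop)

theorem isCompact_convexHull (hs : IsCompact s) [FiniteDimensional ℝ (vectorSpan ℝ s)] :
    IsCompact (convexHull ℝ s) := by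
  rw [convexHull_eq_biUnion_convexCombinations]
  exact (Set.finite_Iic _).isCompact_biUnion fun n _ ↦ isCompact_convexCombinations hs n

end ConvexHull

section InnerProductSpace

open scoped InnerProductSpace

variable {H : Type*} [NormedAddCommGroup H] [InnerProductSpace ℝ H]

theorem mem_of_forall_exists_inner_sub_nonneg {C : Set H} (hne : C.Nonempty)
    (hcomplete : IsComplete C) (hconvex : Convex ℝ C) {p : H}
    (h : ∀ c ∈ C, ∃ k ∈ C, 0 ≤ ⟪p - c, k - p⟫_ℝ) : p ∈ C := by
  obtain ⟨c, hc, hmin⟩ := exists_norm_eq_iInf_of_complete_convex hne hcomplete hconvex p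
  obtain ⟨k, hk, hkp⟩ := h c hc
  have hkc : ⟪p - c, k - c⟫_ℝ ≤ 0 := (norm_eq_iInf_iff_real_inner_le_zero hconvex hc).1 hmin k hk
  have hself : ⟪p - c, p - c⟫_ℝ = ⟪p - c, k - c⟫_ℝ - ⟪p - c, k - p⟫_ℝ := by
    rw [← inner_sub_right, sub_sub_sub_cancel_left]
  have hpc : p - c = 0 := real_inner_self_nonpos.1 (by linarith)
  rwa [sub_eq_zero.1 hpc]

end InnerProductSpace

section QuadraticMap

theorem finiteDimensional_span_range_quadraticMap {K M N : Type*} [Field K] [Invertible (2 : K)]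
    [AddCommGroup M] [Module K M] [FiniteDimensional K M] [AddCommGroup N] [Module K N]
    (Q : QuadraticMap K M N) : FiniteDimensional K (Submodule.span K (Set.range Q)) := by
  let S := Submodule.map₂ (QuadraticMap.associated Q) ⊤ ⊤
  have : FiniteDimensional K S :=
    Module.Finite.iff_fg.2 (Module.Finite.fg_top.map₂ _ Module.Finite.fg_top)
  refine Submodule.finiteDimensional_of_le (S₂ := S) (Submodule.span_le.2 ?_)
  rintro _ ⟨v, rfl⟩
  rw [← QuadraticMap.associated_eq_self_apply K Q v]
  exact Submodule.apply_mem_map₂ _ trivial trivial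

theorem continuous_quadraticMap {E F : Type*} [NormedAddCommGroup E] [NormedSpace ℝ E]
    [FiniteDimensional ℝ E] [NormedAddCommGroup F] [NormedSpace ℝ F] (Q : QuadraticMap ℝ E F) :
    Continuous Q := by
  let B := LinearMap.toContinuousBilinearMap (QuadraticMap.associated Q)
  have hB : ⇑Q = fun v ↦ B v v := funext fun v ↦ (QuadraticMap.associated_eq_self_apply ℝ Q v).symm
  rw [hB]
  fun_prop

variable {E : Type*} [NormedAddCommGroup E] [NormedSpace ℝ E] [FiniteDimensional ℝ E]
  {Q : QuadraticForm ℝ E}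

theorem exists_pos_forall_mul_norm_sq_le_of_posDef (hQ : Q.PosDef) :
    ∃ δ > 0, ∀ v, δ * ‖v‖ ^ 2 ≤ Q v := by
  have := FiniteDimensional.proper ℝ E
  obtain ⟨δ, hδ, hδQ⟩ := (isCompact_sphere (0 : E) 1).exists_forall_le'
    (continuous_quadraticMap Q).continuousOn
    fun v hv ↦ hQ v (ne_zero_of_mem_unit_sphere ⟨v, hv⟩)
  refine ⟨δ, hδ, fun v ↦ ?_⟩
  obtain rfl | hv := eq_or_ne v 0
  · simp
  have hnorm : ‖v‖ ≠ 0 := norm_ne_zero_iff.2 hv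
  calc δ * ‖v‖ ^ 2 ≤ Q (‖v‖⁻¹ • v) * ‖v‖ ^ 2 := by
        gcongr
        exact hδQ _ (by simp [norm_smul, hnorm])
    _ = Q v := by
        rw [QuadraticMap.map_smul, smul_eq_mul]
        field_simp

theorem isCompact_setOf_eq_one_of_posDef (hQ : Q.PosDef) : IsCompact {v | Q v = 1} := by
  have := FiniteDimensional.proper ℝ E
  obtain ⟨δ, hδ, hδQ⟩ := exists_pos_forall_mul_norm_sq_le_of_posDef hQ
  refine (isCompact_closedBall (0 : E) √δ⁻¹).of_isClosed_subset
    (isClosed_eq (continuous_quadraticMap Q) continuous_const) fun v (hv : Q v = 1) ↦ ?_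
  rw [mem_closedBall_zero_iff]
  refine Real.le_sqrt_of_sq_le ?_
  rw [inv_eq_one_div, le_div_iff₀' hδ, ← hv]
  exact hδQ v

end QuadraticMap

section ContinuousMap

variable {X : Type*} [TopologicalSpace X]

/-- The quadratic map `ψ ↦ |ψ|²` from continuous maps to continuous functions. -/
noncomputable def pointwiseNormSq (X E : Type*) [TopologicalSpace X] [NormedAddCommGroup E]
    [InnerProductSpace ℝ E] : QuadraticMap ℝ C(X, E) C(X, ℝ) :=
  LinearMap.BilinMap.toQuadraticMap <|
    LinearMap.mk₂ ℝ (fun f g ↦ ⟨fun x ↦ inner ℝ (f x) (g x), by fun_prop⟩)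
      (fun _ _ _ ↦ by ext; simp [inner_add_left])
      (fun _ _ _ ↦ by ext; simp [real_inner_smul_left])
      (fun _ _ _ ↦ by ext; simp [inner_add_right])
      (fun _ _ _ ↦ by ext; simp [real_inner_smul_right])

variable {E : Type*} [NormedAddCommGroup E] [InnerProductSpace ℝ E]

@[simp]
theorem pointwiseNormSq_apply (ψ : C(X, E)) (x : X) : pointwiseNormSq X E ψ x = ‖ψ x‖ ^ 2 :=
  real_inner_self_eq_norm_sq (ψ x)

theorem exists_sum_norm_sq_eq_mul_of_mem_convexHull {V : Submodule ℝ C(X, E)} {ρ : C(X, ℝ)}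
    (hρ : ρ ∈ convexHull ℝ (pointwiseNormSq X E '' V)) {r : ℝ} (hr : 0 ≤ r) :
    ∃ m : ℕ, 1 ≤ m ∧ ∃ ψ : Fin m → C(X, E),
      (∀ j, ψ j ∈ V) ∧ ∀ x, ∑ j, ‖ψ j x‖ ^ 2 = r * ρ x := by
  rw [convexHull_eq_iUnion_convexCombinations, Set.mem_iUnion] at hρ
  obtain ⟨m, hm⟩ := hρ
  obtain ⟨w, ⟨hw_nonneg, hw_sum⟩, z, hz, rfl⟩ := mem_convexCombinations.1 hm
  choose φ hφV hφ using hz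
  have hm_ne : m ≠ 0 := by
    rintro rfl
    simp at hw_sum
  refine ⟨m, Nat.one_le_iff_ne_zero.2 hm_ne, fun j ↦ √(r * w j) • φ j,
    fun j ↦ V.smul_mem _ (hφV j), fun x ↦ ?_⟩
  calc ∑ j, ‖(√(r * w j) • φ j) x‖ ^ 2 = ∑ j, r * (w j * z j x) := by
        refine Finset.sum_congr rfl fun j _ ↦ ?_
        rw [← pointwiseNormSq_apply, QuadraticMap.map_smul,
          Real.mul_self_sqrt (mul_nonneg hr (hw_nonneg j)), hφ, ContinuousMap.smul_apply,
          smul_eq_mul, mul_assoc]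
    _ = r * (∑ j, w j • z j) x := by simp [← Finset.mul_sum]

variable [CompactSpace X] [MeasurableSpace X]

theorem integrable_continuousMap [OpensMeasurableSpace X] (μ : Measure X) [IsFiniteMeasure μ]
    (f : C(X, ℝ)) : Integrable f μ :=
  f.continuous.integrable_of_hasCompactSupport (.of_compactSpace f)

/-- Integration against `μ` as a linear form on continuous functions. -/
noncomputable def integralLinearMap [OpensMeasurableSpace X] (μ : Measure X) [IsFiniteMeasure μ] :
    C(X, ℝ) →ₗ[ℝ] ℝ where
  toFun f := ∫ x, f x ∂μ
  map_add' f g := integral_add (integrable_continuousMap μ f) (integrable_continuousMap μ g)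
  map_smul' c f := integral_const_mul c f

theorem integralLinearMap_apply [OpensMeasurableSpace X] (μ : Measure X) [IsFiniteMeasure μ]
    (f : C(X, ℝ)) : integralLinearMap μ f = ∫ x, f x ∂μ :=
  rfl

theorem posDef_integral_pointwiseNormSq [OpensMeasurableSpace X] (μ : Measure X)
    [IsFiniteMeasure μ] [μ.IsOpenPosMeasure] :
    ((integralLinearMap μ).compQuadraticMap (pointwiseNormSq X E)).PosDef := by
  intro ψ hψ
  obtain ⟨x, hx⟩ := DFunLike.ne_iff.1 hψ
  refine integral_pos_of_integrable_nonneg_nonzero (x := x) (map_continuous _)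
    (integrable_continuousMap μ _) (fun y ↦ ?_) ?_
  · simp
  · simpa using hx

/-- The densities `|ψ|²` of the `L²(μ)`-normalised elements `ψ` of `V`. -/
def normalizedDensities (μ : Measure X) (V : Submodule ℝ C(X, E)) : Set C(X, ℝ) :=
  pointwiseNormSq X E '' {ψ | ψ ∈ V ∧ ∫ x, ‖ψ x‖ ^ 2 ∂μ = 1}

theorem isCompact_convexHull_normalizedDensities [OpensMeasurableSpace X] (μ : Measure X)
    [IsFiniteMeasure μ] [μ.IsOpenPosMeasure] (V : Submodule ℝ C(X, E)) [FiniteDimensional ℝ V] :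
    IsCompact (convexHull ℝ (normalizedDensities μ V)) := by
  let N : QuadraticMap ℝ V C(X, ℝ) := (pointwiseNormSq X E).comp V.subtype
  let Q : QuadraticForm ℝ V := (integralLinearMap μ).compQuadraticMap N
  have hN_image : normalizedDensities μ V = N '' {ψ | Q ψ = 1} := by
    ext ρ
    simp [normalizedDensities, N, Q, integralLinearMap_apply, and_assoc, and_left_comm]
  have hQ : Q.PosDef := fun ψ hψ ↦
    posDef_integral_pointwiseNormSq μ ψ.1 (Submodule.coe_eq_zero.not.2 hψ)
  have hspan : vectorSpan ℝ (N '' {ψ | Q ψ = 1}) ≤ Submodule.span ℝ (Set.range N) :=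
    (vectorSpan_mono ℝ (Set.image_subset_range _ _)).trans (vectorSpan_le_span _)
  have := finiteDimensional_span_range_quadraticMap N
  have := Submodule.finiteDimensional_of_le hspan
  rw [hN_image]
  exact isCompact_convexHull
    ((isCompact_setOf_eq_one_of_posDef hQ).image (continuous_quadraticMap N))

theorem const_inv_measureReal_univ_mem_convexHull [BorelSpace X] (μ : Measure X)
    [IsFiniteMeasure μ] [μ.IsOpenPosMeasure] {K : Set C(X, ℝ)}
    (hK : IsCompact (convexHull ℝ K)) (hK_integral : ∀ ρ ∈ K, ∫ x, ρ x ∂μ = 1)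
    (h : ∀ ξ : C(X, ℝ), ∫ x, ξ x ∂μ = 0 → ∃ ρ ∈ K, ∫ x, ξ x * ρ x ∂μ = 0) :
    ContinuousMap.const X (μ.real Set.univ)⁻¹ ∈ convexHull ℝ K := by
  let L := ContinuousMap.toLp (E := ℝ) 2 μ ℝ
  let p : C(X, ℝ) := ContinuousMap.const X (μ.real Set.univ)⁻¹
  obtain ⟨ρ₀, hρ₀, -⟩ := h 0 (by simp)
  have hμ : μ ≠ 0 := by
    rintro rfl
    simpa using hK_integral ρ₀ hρ₀
  have : NeZero μ := ⟨hμ⟩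
  have hp_integral : ∫ x, p x ∂μ = 1 := by simp [p, measureReal_univ_ne_zero]
  have hhull_integral : convexHull ℝ K ⊆ integralLinearMap μ ⁻¹' {1} :=
    convexHull_min hK_integral ((convex_singleton 1).linear_preimage _)
  refine (ContinuousMap.toLp_injective μ (p := 2) (𝕜 := ℝ)).mem_set_image.1 ?_
  refine mem_of_forall_exists_inner_sub_nonneg
    ⟨L ρ₀, Set.mem_image_of_mem L (subset_convexHull ℝ K hρ₀)⟩
    (hK.image L.continuous).isComplete
    ((convex_convexHull ℝ K).linear_image L.toLinearMap) ?_
  rintro _ ⟨c, hc, rfl⟩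
  have hξ : ∫ x, (p - c) x ∂μ = 0 := by
    rw [← integralLinearMap_apply, map_sub, hhull_integral hc, integralLinearMap_apply,
      hp_integral, sub_self]
  obtain ⟨ρ, hρ, hξρ⟩ := h (p - c) hξ
  refine ⟨L ρ, Set.mem_image_of_mem L (subset_convexHull ℝ K hρ), ?_⟩
  have hLρ : inner ℝ (L (p - c)) (L ρ) = 0 := by
    rw [ContinuousMap.inner_toLp, ← hξρ]
    simp [mul_comm]
  have hLp : inner ℝ (L (p - c)) (L p) = 0 := by
    rw [ContinuousMap.inner_toLp]
    exact (integral_const_mul _ _).trans (mul_eq_zero_of_right _ hξ)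
  rw [← map_sub, inner_sub_right, hLρ, hLp, sub_self]

end ContinuousMap

theorem exists_eigenspinors_sum_of_squares_one_general {X E : Type*} [TopologicalSpace X]
    [CompactSpace X] [MeasurableSpace X] [BorelSpace X] (μ : Measure X) [IsFiniteMeasure μ]
    [μ.IsOpenPosMeasure] [NormedAddCommGroup E] [InnerProductSpace ℝ E]
    (V : Submodule ℝ C(X, E)) [FiniteDimensional ℝ V]
    (h : ∀ ξ : C(X, ℝ), (∫ x, ξ x ∂μ) = 0 →
      ∃ ψ ∈ V, (∫ x, ‖ψ x‖ ^ 2 ∂μ) = 1 ∧ (∫ x, ξ x * ‖ψ x‖ ^ 2 ∂μ) = 0) :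
    ∃ m : ℕ, 1 ≤ m ∧ ∃ ψ : Fin m → C(X, E),
      (∀ j, ψ j ∈ V) ∧ ∀ x : X, ∑ j, ‖ψ j x‖ ^ 2 = 1 := by
  have hconst : ContinuousMap.const X (μ.real Set.univ)⁻¹ ∈
      convexHull ℝ (normalizedDensities μ V) := by
    refine const_inv_measureReal_univ_mem_convexHull μ
      (isCompact_convexHull_normalizedDensities μ V) ?_ fun ξ hξ ↦ ?_
    · rintro _ ⟨ψ, ⟨-, hψ⟩, rfl⟩
      simpa using hψ
    · obtain ⟨ψ, hψV, hψ, hξψ⟩ := h ξ hξ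
      exact ⟨_, ⟨ψ, ⟨hψV, hψ⟩, rfl⟩, by simpa using hξψ⟩
  have hsubset : normalizedDensities μ V ⊆ pointwiseNormSq X E '' V :=
    Set.image_mono fun ψ hψ ↦ hψ.1
  obtain ⟨m, hm, ψ, hψV, hψ⟩ := exists_sum_norm_sq_eq_mul_of_mem_convexHull
    (convexHull_mono hsubset hconst) (measureReal_nonneg (μ := μ) (s := Set.univ))
  refine ⟨m, hm, ψ, hψV, fun x ↦ (hψ x).trans ?_⟩
  have : Nonempty X := ⟨x⟩
  exact mul_inv_cancel₀ measureReal_univ_ne_zero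

/-- The convexity/Hahn–Banach step in Proposition 1.2: let `X` be a compact space, `μ` a
finite Borel measure with full support and `μ(X) > 0`, and `V` a finite-dimensional complex
subspace of continuous `ℂ^d`-valued maps. If for every continuous `ξ : X → ℝ` with
`∫ ξ dμ = 0` there is `ψ ∈ V`, `L²(μ)`-normalised, with `∫ ξ |ψ|² dμ = 0`, then there are
`ψ₁, …, ψ_m ∈ V` with `Σⱼ |ψⱼ(x)|² = 1` for every `x ∈ X`. -/
theorem exists_eigenspinors_sum_of_squares_one
    (X : Type*) [TopologicalSpace X] [CompactSpace X]
    [MeasurableSpace X] [BorelSpace X]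
    (μ : Measure X) [IsFiniteMeasure μ] [μ.IsOpenPosMeasure]
    (hμ : 0 < μ Set.univ)
    (d : ℕ) (hd : 1 ≤ d)
    (V : Submodule ℂ C(X, EuclideanSpace ℂ (Fin d)))
    (hV : FiniteDimensional ℂ V)
    (h : ∀ ξ : C(X, ℝ), (∫ x, ξ x ∂μ) = 0 →
      ∃ ψ ∈ V, (∫ x, ‖ψ x‖ ^ 2 ∂μ) = 1 ∧ (∫ x, ξ x * ‖ψ x‖ ^ 2 ∂μ) = 0) :
    ∃ m : ℕ, 1 ≤ m ∧
      ∃ ψ : Fin m → C(X, EuclideanSpace ℂ (Fin d)),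
        (∀ j, ψ j ∈ V) ∧ ∀ x : X, ∑ j, ‖ψ j x‖ ^ 2 = 1 := by
  have : FiniteDimensional ℝ (V.restrictScalars ℝ) := FiniteDimensional.complexToReal V
  exact exists_eigenspinors_sum_of_squares_one_general μ (V.restrictScalars ℝ) h
end
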